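/- arXiv:0906.4406 — 4 statements merged into one kernel-verified Lean document; each statement's English description precedes it below -/
import Mathlib

section
/- For every compact set K ⊆ O₂ there exists a constant C(K) > 0 such that for every admissible function u, ∫_K |u|² dx dy ≤ C(K) ∫_Ω |∇_{x,y}u|² dx dy. -/
open MeasureTheory Set

theorem aux_seg {E : Type*} [NormedAddCommGroup E] [NormedSpace ℝ E]
    {U : Set E} (hU : IsOpen U) {w : E → ℝ} (hw : ContDiffOn ℝ 1 w U) (x v : E)
    (hx : ∀ t ∈ Icc (0 : ℝ) 1, x + t • v ∈ U) :
    ENNReal.ofReal (w (x + v) ^ 2) ≤ 2 * ENNReal.ofReal (w x ^ 2)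
      + 2 * ENNReal.ofReal (‖v‖ ^ 2) *
        ∫⁻ t in Ioc (0 : ℝ) 1, ENNReal.ofReal (‖fderiv ℝ w (x + t • v)‖ ^ 2) := by
  have hcl : Continuous fun t : ℝ => x + t • v := by fun_prop
  have hc : ContinuousOn (fun t : ℝ => fderiv ℝ w (x + t • v)) (Icc 0 1) :=
    (hw.continuousOn_fderiv_of_isOpen hU le_rfl).comp hcl.continuousOn hx
  have hcv : ContinuousOn (fun t : ℝ => fderiv ℝ w (x + t • v) v) (Icc 0 1) :=
    hc.clm_apply continuousOn_const
  have hd : ∀ t ∈ uIcc (0 : ℝ) 1,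
      HasDerivAt (fun t : ℝ => w (x + t • v)) (fderiv ℝ w (x + t • v) v) t := by
    intro t ht
    rw [uIcc_of_le zero_le_one] at ht
    have h1 : HasFDerivAt w (fderiv ℝ w (x + t • v)) (x + t • v) :=
      ((hw.differentiableOn one_ne_zero).differentiableAt (hU.mem_nhds (hx t ht))).hasFDerivAt
    have h2 : HasDerivAt (fun t : ℝ => x + t • v) v t := by
      simpa using ((hasDerivAt_id t).smul_const v).const_add x
    exact h1.comp_hasDerivAt t h2
  have hci : IntervalIntegrable (fun t : ℝ => fderiv ℝ w (x + t • v) v) volume 0 1 :=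
    ContinuousOn.intervalIntegrable (by rwa [uIcc_of_le zero_le_one])
  have hft := intervalIntegral.integral_eq_sub_of_hasDerivAt hd hci
  simp only [one_smul, zero_smul, add_zero] at hft
  set f : ℝ → ℝ := fun t => fderiv ℝ w (x + t • v) v with hf
  set b := w (x + v) - w x with hb
  have hci2 : IntervalIntegrable (fun t : ℝ => f t ^ 2) volume 0 1 :=
    ContinuousOn.intervalIntegrable (by rw [uIcc_of_le zero_le_one]; exact hcv.pow 2)
  have hci3 : IntervalIntegrable (fun t : ℝ => ‖v‖ ^ 2 * ‖fderiv ℝ w (x + t • v)‖ ^ 2) volume 0 1 :=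
    ContinuousOn.intervalIntegrable (by
      rw [uIcc_of_le zero_le_one]; exact continuousOn_const.mul (hc.norm.pow 2))
  have hcs : b ^ 2 ≤ ∫ t in (0:ℝ)..1, f t ^ 2 := by
    have h0 : ∫ t in (0:ℝ)..1, (2 * b * f t - b ^ 2) ≤ ∫ t in (0:ℝ)..1, f t ^ 2 := by
      refine intervalIntegral.integral_mono_on zero_le_one
        ((hci.const_mul _).sub intervalIntegrable_const) hci2 ?_
      intro t _
      nlinarith [sq_nonneg (f t - b)]
    rw [intervalIntegral.integral_sub (hci.const_mul _) intervalIntegrable_const,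
      intervalIntegral.integral_const_mul, hft] at h0
    simp at h0
    nlinarith
  have hle : b ^ 2 ≤ ∫ t in (0:ℝ)..1, ‖v‖ ^ 2 * ‖fderiv ℝ w (x + t • v)‖ ^ 2 := by
    refine hcs.trans (intervalIntegral.integral_mono_on zero_le_one hci2 hci3 ?_)
    intro t _
    have := (fderiv ℝ w (x + t • v)).le_opNorm v
    rw [← mul_pow, ← sq_abs (f t)]
    refine pow_le_pow_left₀ (abs_nonneg _) ?_ 2
    rw [mul_comm]; exact this
  have hle2 : ENNReal.ofReal (b ^ 2) ≤ ENNReal.ofReal (‖v‖ ^ 2) *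
      ∫⁻ t in Ioc (0 : ℝ) 1, ENNReal.ofReal (‖fderiv ℝ w (x + t • v)‖ ^ 2) := by
    refine (ENNReal.ofReal_le_ofReal hle).trans ?_
    rw [intervalIntegral.integral_of_le zero_le_one,
      ofReal_integral_eq_lintegral_ofReal
        ((intervalIntegrable_iff_integrableOn_Ioc_of_le zero_le_one).1 hci3)
        (Filter.Eventually.of_forall fun t => by positivity),
      ← lintegral_const_mul' _ _ ENNReal.ofReal_ne_top]
    simp_rw [ENNReal.ofReal_mul (sq_nonneg ‖v‖)]
    exact le_rfl
  have h3 : w (x + v) ^ 2 ≤ 2 * w x ^ 2 + 2 * b ^ 2 := by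
    nlinarith [sq_nonneg (w x - b)]
  refine (ENNReal.ofReal_le_ofReal h3).trans ?_
  rw [ENNReal.ofReal_add (by positivity) (by positivity), ENNReal.ofReal_mul (by norm_num),
    ENNReal.ofReal_mul (by norm_num), ENNReal.ofReal_ofNat, mul_assoc]
  gcongr

theorem aux_trans {E : Type*} [NormedAddCommGroup E] [NormedSpace ℝ E]
    [MeasurableSpace E] [BorelSpace E] [SecondCountableTopology E] (μ : Measure E) [SFinite μ]
    [μ.IsAddRightInvariant]
    {U : Set E} (hU : IsOpen U) {w : E → ℝ} (hw : ContDiffOn ℝ 1 w U) {A : Set E}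
    (hA : MeasurableSet A) (v : E)
    (hx : ∀ x ∈ A, ∀ t ∈ Icc (0 : ℝ) 1, x + t • v ∈ U) :
    ∫⁻ x in A, ENNReal.ofReal (w (x + v) ^ 2) ∂μ ≤ 2 * ∫⁻ x in A, ENNReal.ofReal (w x ^ 2) ∂μ
      + 2 * ENNReal.ofReal (‖v‖ ^ 2) * ∫⁻ x in U, ENNReal.ofReal (‖fderiv ℝ w x‖ ^ 2) ∂μ := by
  have hg : Measurable fun x => ENNReal.ofReal (‖fderiv ℝ w x‖ ^ 2) :=
    ((measurable_fderiv ℝ w).norm.pow_const 2).ennreal_ofReal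
  have hg2 : Measurable fun p : E × ℝ => ENNReal.ofReal (‖fderiv ℝ w (p.1 + p.2 • v)‖ ^ 2) :=
    hg.comp (by fun_prop)
  have hm := hg2.lintegral_prod_right' (ν := volume.restrict (Ioc (0:ℝ) 1))
  refine (setLIntegral_mono' hA fun x hxA => aux_seg hU hw x v (hx x hxA)).trans ?_
  rw [lintegral_add_right _ (hm.const_mul _), lintegral_const_mul' _ _ (by simp),
    lintegral_const_mul _ hm]
  refine add_le_add le_rfl (mul_le_mul' le_rfl ?_)
  rw [lintegral_lintegral_swap hg2.aemeasurable]
  have key : ∀ t ∈ Ioc (0:ℝ) 1, ∫⁻ x in A, ENNReal.ofReal (‖fderiv ℝ w (x + t • v)‖ ^ 2) ∂μ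
      ≤ ∫⁻ x in U, ENNReal.ofReal (‖fderiv ℝ w x‖ ^ 2) ∂μ := by
    intro t ht
    rw [← lintegral_indicator hU.measurableSet, ← lintegral_add_right_eq_self (μ := μ) (U.indicator _) (t • v),
      ← lintegral_indicator hA]
    refine lintegral_mono fun x => ?_
    by_cases hxA : x ∈ A
    · rw [indicator_of_mem hxA, indicator_of_mem (hx x hxA t ⟨ht.1.le, ht.2⟩)]
    · rw [indicator_of_notMem hxA]; exact zero_le
  refine (setLIntegral_mono' measurableSet_Ioc key).trans ?_
  simp

theorem aux_ball {E : Type*} [NormedAddCommGroup E] [NormedSpace ℝ E]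
    [MeasurableSpace E] [BorelSpace E] [SecondCountableTopology E] (μ : Measure E) [SFinite μ]
    [μ.IsAddRightInvariant]
    {U : Set E} (hU : IsOpen U) {w : E → ℝ} (hw : ContDiffOn ℝ 1 w U) (p q : E) (r : ℝ)
    (hx : ∀ x ∈ Metric.ball q r, ∀ t ∈ Icc (0 : ℝ) 1, x + t • (p - q) ∈ U) :
    ∫⁻ x in Metric.ball p r, ENNReal.ofReal (w x ^ 2) ∂μ
      ≤ 2 * ∫⁻ x in Metric.ball q r, ENNReal.ofReal (w x ^ 2) ∂μ
      + 2 * ENNReal.ofReal (‖p - q‖ ^ 2) *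
        ∫⁻ x in U, ENNReal.ofReal (‖fderiv ℝ w x‖ ^ 2) ∂μ := by
  refine le_trans (le_of_eq ?_) (aux_trans μ hU hw Metric.isOpen_ball.measurableSet (p - q) hx)
  rw [← lintegral_indicator Metric.isOpen_ball.measurableSet,
    ← lintegral_add_right_eq_self _ (p - q), ← lintegral_indicator Metric.isOpen_ball.measurableSet]
  congr 1
  ext x
  have : x + (p - q) ∈ Metric.ball p r ↔ x ∈ Metric.ball q r := by
    rw [mem_ball_iff_norm, mem_ball_iff_norm]
    congr! 2
    abel
  by_cases hxq : x ∈ Metric.ball q r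
  · rw [indicator_of_mem hxq, indicator_of_mem (this.2 hxq)]
  · rw [indicator_of_notMem hxq, indicator_of_notMem (fun hh => hxq (this.1 hh))]

/-- Local `L²` control on compact subsets of the region `O₂` below the strip, in terms of
the Dirichlet energy, for functions vanishing near the top boundary. -/
theorem poincare_compact
    (d : ℕ) (hd : 1 ≤ d)
    (η : EuclideanSpace ℝ (Fin d) → ℝ) (hη : Continuous η)
    (h : ℝ) (hh : 0 < h)
    (Ω₂ : Set (EuclideanSpace ℝ (Fin d) × ℝ)) (hΩ₂ : IsOpen Ω₂)
    (hstrip : {p : EuclideanSpace ℝ (Fin d) × ℝ | η p.1 - h ≤ p.2 ∧ p.2 ≤ η p.1} ⊆ Ω₂)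
    (Ω : Set (EuclideanSpace ℝ (Fin d) × ℝ))
    (hΩ : Ω = {p : EuclideanSpace ℝ (Fin d) × ℝ | p.2 < η p.1} ∩ Ω₂)
    (hconn : IsConnected Ω)
    (K : Set (EuclideanSpace ℝ (Fin d) × ℝ)) (hK : IsCompact K)
    (hKO₂ : K ⊆ {p ∈ Ω | p.2 < η p.1 - h}) :
    ∃ C > (0 : ℝ), ∀ u : EuclideanSpace ℝ (Fin d) × ℝ → ℝ,
      ContDiffOn ℝ 1 u Ω →
      (∫⁻ p in Ω, ENNReal.ofReal (‖fderiv ℝ u p‖ ^ 2)) < ⊤ →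
      (∃ ε ∈ Ioo (0 : ℝ) h, ∀ p ∈ Ω, η p.1 - ε < p.2 → u p = 0) →
      ∫⁻ p in K, ENNReal.ofReal (u p ^ 2)
        ≤ ENNReal.ofReal C * ∫⁻ p in Ω, ENNReal.ofReal (‖fderiv ℝ u p‖ ^ 2) := by
  haveI : (volume : Measure (EuclideanSpace ℝ (Fin d) × ℝ)).IsAddHaarMeasure :=
    inferInstanceAs ((volume : Measure (EuclideanSpace ℝ (Fin d))).prod
      (volume : Measure ℝ)).IsAddHaarMeasure
  haveI : (volume : Measure (EuclideanSpace ℝ (Fin d) × ℝ)).IsAddRightInvariant :=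
    inferInstance
  have hΩo : IsOpen Ω := by
    rw [hΩ]; exact (isOpen_lt continuous_snd (hη.comp continuous_fst)).inter hΩ₂
  set U : Set (EuclideanSpace ℝ (Fin d) × ℝ) := Ω₂ ∪ {p | η p.1 < p.2} with hUdef
  have hU : IsOpen U := hΩ₂.union (isOpen_lt (hη.comp continuous_fst) continuous_snd)
  have hΩU : Ω ⊆ U := by
    rw [hΩ]; exact fun p hp => Or.inl hp.2
  have hUΩ : ∀ p ∈ U, p.2 < η p.1 → p ∈ Ω := by
    rintro p (hp | hp) hlt
    · rw [hΩ]; exact ⟨hlt, hp⟩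
    · exact absurd hp (not_lt.2 hlt.le)
  have hup : ∀ p : EuclideanSpace ℝ (Fin d) × ℝ, η p.1 - h ≤ p.2 → p ∈ U := by
    intro p hp
    by_cases h1 : p.2 ≤ η p.1
    · exact Or.inl (hstrip ⟨hp, h1⟩)
    · exact Or.inr (not_le.1 h1)
  let P : (EuclideanSpace ℝ (Fin d) × ℝ → ℝ) → Prop := fun w =>
    ContDiffOn ℝ 1 w U ∧ ∀ p, η p.1 ≤ p.2 → w p = 0
  let En : (EuclideanSpace ℝ (Fin d) × ℝ → ℝ) → ENNReal := fun w =>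
    ∫⁻ p in U, ENNReal.ofReal (‖fderiv ℝ w p‖ ^ 2)
  let G : Set (EuclideanSpace ℝ (Fin d) × ℝ) := {p | ∃ r > (0:ℝ), ∃ C : NNReal, ∀ w, P w →
    ∫⁻ x in Metric.ball p r, ENNReal.ofReal (w x ^ 2) ≤ C * En w}
  -- openness
  have hGo : IsOpen G := by
    rw [Metric.isOpen_iff]
    rintro p ⟨r, hr, C, hC⟩
    refine ⟨r / 2, by positivity, fun q hq => ⟨r / 2, by positivity, C, fun w hw => ?_⟩⟩
    refine le_trans (lintegral_mono_set ?_) (hC w hw)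
    refine Metric.ball_subset_ball' ?_
    rw [Metric.mem_ball] at hq
    linarith
  -- base point
  have hbase : (Ω ∩ G).Nonempty := by
    have hp0 : ((0 : EuclideanSpace ℝ (Fin d)), η 0 - h / 2) ∈
        {p : EuclideanSpace ℝ (Fin d) × ℝ | η p.1 - h < p.2} := by
      simp only [mem_ofPred_eq]; linarith
    set p0 : EuclideanSpace ℝ (Fin d) × ℝ := (0, η 0 - h / 2) with hp0d
    have hop : IsOpen {p : EuclideanSpace ℝ (Fin d) × ℝ | η p.1 - h < p.2} :=
      isOpen_lt ((hη.comp continuous_fst).sub continuous_const) continuous_snd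
    obtain ⟨r, hr, hrs⟩ := Metric.isOpen_iff.1 hop p0 hp0
    refine ⟨p0, hUΩ p0 (hup p0 hp0.le) ?_, r, hr,
      2 * Real.toNNReal (‖p0 - (p0 + ((0 : EuclideanSpace ℝ (Fin d)), h))‖ ^ 2), ?_⟩
    · simp only [hp0d]; linarith
    intro w hw
    have hmem : ∀ x ∈ Metric.ball (p0 + ((0 : EuclideanSpace ℝ (Fin d)), h)) r,
        η x.1 < x.2 := by
      intro x hx
      have h1 : x - ((0 : EuclideanSpace ℝ (Fin d)), h) ∈ Metric.ball p0 r := by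
        rw [mem_ball_iff_norm] at hx ⊢
        rwa [sub_sub, add_comm _ p0]
      have h2 := hrs h1
      simp only [mem_ofPred_eq, Prod.fst_sub, Prod.snd_sub, sub_zero] at h2
      linarith
    have hb := aux_ball volume hU hw.1 p0 (p0 + ((0 : EuclideanSpace ℝ (Fin d)), h)) r ?_
    · have hz : ∫⁻ x in Metric.ball (p0 + ((0 : EuclideanSpace ℝ (Fin d)), h)) r,
          ENNReal.ofReal (w x ^ 2) = 0 := by
        rw [setLIntegral_congr_fun (g := fun _ => 0) Metric.isOpen_ball.measurableSet]
        · simp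
        · intro x hx
          simp [hw.2 x (hmem x hx).le]
      rw [hz, mul_zero, zero_add] at hb
      exact hb
    · intro x hx t ht
      have h1 := hmem x hx
      apply hup
      simp only [sub_add_cancel_left, Prod.fst_add, Prod.snd_add, Prod.smul_fst, Prod.smul_snd,
        Prod.fst_neg, Prod.snd_neg, neg_zero, smul_zero, add_zero, smul_eq_mul]
      nlinarith [ht.1, ht.2]
  -- relative closedness
  have hclos : Ω ∩ closure G ⊆ G := by
    rintro p ⟨hpΩ, hpG⟩
    obtain ⟨R, hR, hRs⟩ := Metric.isOpen_iff.1 hU p (hΩU hpΩ)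
    obtain ⟨q, ⟨r, hr, C, hC⟩, hpq⟩ := Metric.mem_closure_iff.1 hpG (R / 2) (by positivity)
    refine ⟨min r (R / 2), by positivity, 2 * C + 2 * Real.toNNReal (‖p - q‖ ^ 2), fun w hw => ?_⟩
    refine (aux_ball volume hU hw.1 p q (min r (R / 2)) ?_).trans ?_
    · intro x hx t ht
      apply hRs
      rw [mem_ball_iff_norm] at hx ⊢
      have e : x + t • (p - q) - p = (x - q) + (1 - t) • (q - p) := by module
      rw [e]
      have h1 : ‖(1 - t) • (q - p)‖ ≤ ‖q - p‖ := by
        rw [norm_smul, Real.norm_eq_abs, abs_of_nonneg (by linarith [ht.2])]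
        nlinarith [ht.1, norm_nonneg (q - p)]
      rw [dist_comm, dist_eq_norm] at hpq
      have := norm_add_le (x - q) ((1 - t) • (q - p))
      have := min_le_right r (R / 2)
      linarith
    · have h1 := (lintegral_mono_set (Metric.ball_subset_ball (x := q)
        (min_le_left r (R / 2)))).trans (hC w hw)
      push_cast
      rw [add_mul, mul_assoc 2 (C : ENNReal)]
      gcongr
      exact le_rfl
  have hΩG : Ω ⊆ G := by
    by_contra hnot
    obtain ⟨p, hpΩ, hpG⟩ := not_subset.1 hnot
    obtain ⟨q, hqΩ, hq1, hq2⟩ := hconn.isPreconnected G (closure G)ᶜ hGo isClosed_closure.isOpen_compl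
      (fun x hx => by
        by_cases hxG : x ∈ closure G
        · exact Or.inl (hclos ⟨hx, hxG⟩)
        · exact Or.inr hxG) hbase ⟨p, hpΩ, fun hc => hpG (hclos ⟨hpΩ, hc⟩)⟩
    exact hq2 (subset_closure hq1)
  -- compactness
  have hKG : ∃ C : NNReal, ∀ w, P w → ∫⁻ x in K, ENNReal.ofReal (w x ^ 2) ≤ C * En w := by
    refine hK.induction_on (p := fun S => ∃ C : NNReal, ∀ w, P w →
      ∫⁻ x in S, ENNReal.ofReal (w x ^ 2) ≤ C * En w) ?_ ?_ ?_ ?_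
    · exact ⟨0, fun w _ => by simp⟩
    · rintro s t hst ⟨C, hC⟩
      exact ⟨C, fun w hw => (lintegral_mono_set hst).trans (hC w hw)⟩
    · rintro s t ⟨C, hC⟩ ⟨D, hD⟩
      refine ⟨C + D, fun w hw => (lintegral_union_le _ _ _).trans ?_⟩
      push_cast
      rw [add_mul]
      exact add_le_add (hC w hw) (hD w hw)
    · intro x hx
      obtain ⟨r, hr, C, hC⟩ := hΩG (hKO₂ hx).1
      exact ⟨_, mem_nhdsWithin_of_mem_nhds (Metric.ball_mem_nhds x hr), C, hC⟩
  obtain ⟨C, hC⟩ := hKG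
  refine ⟨C + 1, by positivity, ?_⟩
  rintro u hu - ⟨ε, ⟨hε, hεh⟩, hu0⟩
  classical
  let w : EuclideanSpace ℝ (Fin d) × ℝ → ℝ := fun p => if p.2 < η p.1 then u p else 0
  have hwΩ : ∀ p ∈ Ω, w =ᶠ[nhds p] u := by
    intro p hp
    filter_upwards [hΩo.mem_nhds hp] with q hq
    rw [hΩ] at hq
    exact if_pos hq.1
  have hwtop : ∀ p ∈ U, η p.1 ≤ p.2 → w =ᶠ[nhds p] fun _ => 0 := by
    intro p hpU hp
    have hop : IsOpen {p : EuclideanSpace ℝ (Fin d) × ℝ | η p.1 - ε < p.2} :=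
      isOpen_lt ((hη.comp continuous_fst).sub continuous_const) continuous_snd
    have hpm : p ∈ {p : EuclideanSpace ℝ (Fin d) × ℝ | η p.1 - ε < p.2} := by
      simp only [mem_ofPred_eq]; linarith
    filter_upwards [hop.mem_nhds hpm, hU.mem_nhds hpU] with q hq hqU
    by_cases hlt : q.2 < η q.1
    · simp only [w, if_pos hlt]
      exact hu0 q (hUΩ q hqU hlt) hq
    · simp only [w, if_neg hlt]
  have hPw : P w := by
    refine ⟨fun p hp => ContDiffAt.contDiffWithinAt ?_, fun p hp => if_neg (not_lt.2 hp)⟩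
    by_cases hlt : p.2 < η p.1
    · have hpΩ := hUΩ p hp hlt
      exact (hu.contDiffAt (hΩo.mem_nhds hpΩ)).congr_of_eventuallyEq (hwΩ p hpΩ)
    · exact contDiffAt_const.congr_of_eventuallyEq (hwtop p hp (not_lt.1 hlt))
  have hEn : En w ≤ ∫⁻ p in Ω, ENNReal.ofReal (‖fderiv ℝ u p‖ ^ 2) := by
    simp only [En]
    rw [← lintegral_indicator hU.measurableSet, ← lintegral_indicator hΩo.measurableSet]
    refine lintegral_mono fun p => ?_
    by_cases hpU : p ∈ U
    · rw [indicator_of_mem hpU]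
      by_cases hlt : p.2 < η p.1
      · have hpΩ := hUΩ p hpU hlt
        rw [indicator_of_mem hpΩ, (hwΩ p hpΩ).fderiv_eq]
      · rw [(hwtop p hpU (not_lt.1 hlt)).fderiv_eq]
        simp
    · rw [indicator_of_notMem hpU]; exact zero_le
  have hKw : ∫⁻ p in K, ENNReal.ofReal (u p ^ 2) = ∫⁻ p in K, ENNReal.ofReal (w p ^ 2) := by
    refine setLIntegral_congr_fun hK.measurableSet fun p hp => ?_
    simp only [(hwΩ p (hKO₂ hp).1).eq_of_nhds]
  rw [hKw]
  refine (hC w hPw).trans ?_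
  refine mul_le_mul' ?_ hEn
  rw [← ENNReal.ofReal_coe_nnreal]
  exact ENNReal.ofReal_le_ofReal (by linarith)
end

section
/- There exist a measurable, locally bounded function g : Ω → ℝ with g(x,y) > 0 for all (x,y) ∈ Ω and g = 1 on O₁, and a constant C > 0, such that for every admissible function u one has the weighted Poincaré inequality ∫_Ω g(x,y) |u(x,y)|² dx dy ≤ C ∫_Ω |∇_{x,y}u(x,y)|² dx dy. -/
open MeasureTheory Set

lemma wp_sq_integral (f : ℝ → ℝ) (hf : ContinuousOn f (Icc 0 1)) :
    (∫ t in (0:ℝ)..1, f t) ^ 2 ≤ ∫ t in (0:ℝ)..1, (f t) ^ 2 := by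
  have hf' : ContinuousOn f (uIcc 0 1) := by rwa [uIcc_of_le zero_le_one]
  set m := ∫ t in (0:ℝ)..1, f t with hm
  have h1 : IntervalIntegrable f volume 0 1 := hf'.intervalIntegrable
  have h2 : IntervalIntegrable (fun t => f t ^ 2) volume 0 1 := (hf'.pow 2).intervalIntegrable
  have h3 : 0 ≤ ∫ t in (0:ℝ)..1, (f t ^ 2 - 2 * m * f t + m ^ 2) :=
    intervalIntegral.integral_nonneg zero_le_one (fun t _ => by nlinarith [sq_nonneg (f t - m)])
  rw [intervalIntegral.integral_add (h2.sub (h1.const_mul _)) (by simp),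
    intervalIntegral.integral_sub h2 (h1.const_mul _), intervalIntegral.integral_const_mul,
    ← hm] at h3
  simp at h3
  nlinarith

section
variable {E : Type*} [NormedAddCommGroup E] [NormedSpace ℝ E]

lemma wp_pointwise (V : Set E) (hV : IsOpen V) (v : E → ℝ) (hv : ContDiffOn ℝ 1 v V)
    (z w : E) (hz : ∀ t ∈ Icc (0:ℝ) 1, z + t • w ∈ V) :
    ENNReal.ofReal (v z ^ 2) ≤ 2 * ENNReal.ofReal (v (z + w) ^ 2) +
      ENNReal.ofReal (2 * ‖w‖ ^ 2) *
        ∫⁻ t in Icc (0:ℝ) 1, ENNReal.ofReal (‖fderiv ℝ v (z + t • w)‖ ^ 2) := by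
  have hc : ContinuousOn (fderiv ℝ v) V := hv.continuousOn_fderiv_of_isOpen hV le_rfl
  have hl : ContinuousOn (fun t : ℝ => z + t • w) (Icc 0 1) := by fun_prop
  have hc' : ContinuousOn (fun t : ℝ => fderiv ℝ v (z + t • w)) (Icc 0 1) :=
    hc.comp hl hz
  have hcw : ContinuousOn (fun t : ℝ => fderiv ℝ v (z + t • w) w) (Icc 0 1) :=
    hc'.clm_apply continuousOn_const
  have hd : ∀ t ∈ Icc (0:ℝ) 1, HasDerivAt (fun t : ℝ => v (z + t • w))
      (fderiv ℝ v (z + t • w) w) t := by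
    intro t ht
    have h1 : HasFDerivAt v (fderiv ℝ v (z + t • w)) (z + t • w) :=
      ((hv.differentiableOn one_ne_zero).differentiableAt (hV.mem_nhds (hz t ht))).hasFDerivAt
    have h2 : HasDerivAt (fun t : ℝ => z + t • w) w t := by
      simpa using ((hasDerivAt_id t).smul_const w).const_add z
    exact h1.comp_hasDerivAt t h2
  have hftc : ∫ t in (0:ℝ)..1, fderiv ℝ v (z + t • w) w = v (z + w) - v z := by
    rw [intervalIntegral.integral_eq_sub_of_hasDerivAt (f := fun t : ℝ => v (z + t • w))]
    · simp
    · rw [uIcc_of_le zero_le_one]; exact hd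
    · apply ContinuousOn.intervalIntegrable
      rwa [uIcc_of_le zero_le_one]
  have hsq := wp_sq_integral _ hcw
  rw [hftc] at hsq
  have hcn : ContinuousOn (fun t : ℝ => ‖fderiv ℝ v (z + t • w)‖ ^ 2) (Icc 0 1) :=
    hc'.norm.pow 2
  have hle : ∫ t in (0:ℝ)..1, (fderiv ℝ v (z + t • w) w) ^ 2 ≤
      ∫ t in (0:ℝ)..1, ‖w‖ ^ 2 * ‖fderiv ℝ v (z + t • w)‖ ^ 2 := by
    apply intervalIntegral.integral_mono_on zero_le_one
    · apply ContinuousOn.intervalIntegrable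
      rw [uIcc_of_le zero_le_one]; exact hcw.pow 2
    · apply ContinuousOn.intervalIntegrable
      rw [uIcc_of_le zero_le_one]; exact continuousOn_const.mul hcn
    · intro t _
      have := (fderiv ℝ v (z + t • w)).le_opNorm w
      rw [← sq_abs, ← Real.norm_eq_abs, ← mul_pow, mul_comm]
      gcongr
  rw [intervalIntegral.integral_const_mul, intervalIntegral.integral_of_le zero_le_one,
    intervalIntegral.integral_of_le zero_le_one,
    ← integral_Icc_eq_integral_Ioc, ← integral_Icc_eq_integral_Ioc] at hle
  rw [intervalIntegral.integral_of_le zero_le_one, ← integral_Icc_eq_integral_Ioc] at hsq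
  have hI : ENNReal.ofReal (∫ t in Icc (0:ℝ) 1, ‖fderiv ℝ v (z + t • w)‖ ^ 2) =
      ∫⁻ t in Icc (0:ℝ) 1, ENNReal.ofReal (‖fderiv ℝ v (z + t • w)‖ ^ 2) :=
    ofReal_integral_eq_lintegral_ofReal (hcn.integrableOn_compact isCompact_Icc)
      (Filter.Eventually.of_forall fun t => by positivity)
  rw [← hI, ← ENNReal.ofReal_mul (by positivity)]
  have h2 : (2 : ENNReal) = ENNReal.ofReal 2 := by simp
  have hI0 : 0 ≤ ∫ t in Icc (0:ℝ) 1, ‖fderiv ℝ v (z + t • w)‖ ^ 2 :=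
    integral_nonneg fun t => by positivity
  rw [h2, ← ENNReal.ofReal_mul (by positivity), ← ENNReal.ofReal_add (by positivity) (by positivity)]
  apply ENNReal.ofReal_le_ofReal
  nlinarith [sq_nonneg (v z - 2 * v (z + w))]

variable [MeasurableSpace E] [BorelSpace E] [SecondCountableTopology E]
  (μ : Measure E) [μ.IsAddRightInvariant] [SFinite μ]

lemma wp_translate (V : Set E) (hV : IsOpen V) (v : E → ℝ) (hv : ContDiffOn ℝ 1 v V)
    (A : Set E) (hA : MeasurableSet A)
    (w : E) (hz : ∀ z ∈ A, ∀ t ∈ Icc (0:ℝ) 1, z + t • w ∈ V) :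
    ∫⁻ z in A, ENNReal.ofReal (v z ^ 2) ∂μ ≤ 2 * ∫⁻ z in A, ENNReal.ofReal (v (z + w) ^ 2) ∂μ +
      ENNReal.ofReal (2 * ‖w‖ ^ 2) *
        ∫⁻ z in V, ENNReal.ofReal (‖fderiv ℝ v z‖ ^ 2) ∂μ := by
  set F : E → ENNReal := fun z => ENNReal.ofReal (‖fderiv ℝ v z‖ ^ 2) with hF
  have hFm : Measurable F :=
    ENNReal.measurable_ofReal.comp ((measurable_fderiv ℝ v).norm.pow_const 2)
  have hm2 : Measurable (fun p : E × ℝ => F (p.1 + p.2 • w)) :=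
    hFm.comp (measurable_fst.add (measurable_snd.smul_const w))
  have hm1 : Measurable (fun z : E => ∫⁻ t in Icc (0:ℝ) 1, F (z + t • w)) :=
    hm2.lintegral_prod_right'
  calc ∫⁻ z in A, ENNReal.ofReal (v z ^ 2) ∂μ
      ≤ ∫⁻ z in A, (2 * ENNReal.ofReal (v (z + w) ^ 2) + ENNReal.ofReal (2 * ‖w‖ ^ 2) *
          ∫⁻ t in Icc (0:ℝ) 1, F (z + t • w)) ∂μ :=
        setLIntegral_mono' hA fun z hzA => wp_pointwise V hV v hv z w (hz z hzA)
    _ = 2 * ∫⁻ z in A, ENNReal.ofReal (v (z + w) ^ 2) ∂μ + ENNReal.ofReal (2 * ‖w‖ ^ 2) *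
          ∫⁻ z in A, ∫⁻ t in Icc (0:ℝ) 1, F (z + t • w) ∂volume ∂μ := by
        rw [lintegral_add_right _ (hm1.const_mul _), lintegral_const_mul' _ _ (by simp),
          lintegral_const_mul' _ _ ENNReal.ofReal_ne_top]
    _ ≤ _ := by
        refine add_le_add le_rfl (mul_le_mul' le_rfl ?_)
        rw [lintegral_lintegral_swap hm2.aemeasurable]
        calc ∫⁻ t in Icc (0:ℝ) 1, ∫⁻ z in A, F (z + t • w) ∂μ
            ≤ ∫⁻ t in Icc (0:ℝ) 1, ∫⁻ z in V, F z ∂μ := by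
              refine setLIntegral_mono' measurableSet_Icc fun t ht => ?_
              rw [← lintegral_indicator hA, ← lintegral_indicator hV.measurableSet,
                ← lintegral_add_right_eq_self (V.indicator F) (t • w)]
              apply lintegral_mono
              intro z
              by_cases hzA : z ∈ A
              · simp [hzA, hz z hzA t ht]
              · simp [hzA]
          _ = _ := by simp

lemma wp_weight (Ω : Set E) (hΩ : IsOpen Ω) (hconn : IsConnected Ω) (P : (E → ℝ) → Prop)
    (hP : ∀ u, P u → ContDiffOn ℝ 1 u Ω) (O : Set E) (hO : IsOpen O) (hOne : O.Nonempty)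
    (hOΩ : O ⊆ Ω) (K : NNReal)
    (hK : ∀ u, P u → ∫⁻ z in O, ENNReal.ofReal (u z ^ 2) ∂μ ≤
      K * ∫⁻ z in Ω, ENNReal.ofReal (‖fderiv ℝ u z‖ ^ 2) ∂μ) :
    ∃ G : E → ENNReal, Measurable G ∧ (∀ z, G z ≤ 1) ∧ (∀ z ∈ Ω, 0 < G z) ∧
      ∀ u, P u → ∫⁻ z in Ω, G z * ENNReal.ofReal (u z ^ 2) ∂μ ≤
        ∫⁻ z in Ω, ENNReal.ofReal (‖fderiv ℝ u z‖ ^ 2) ∂μ := by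
  let Good : Set E → Prop := fun A => ∃ K : NNReal, ∀ u, P u →
    ∫⁻ z in A, ENNReal.ofReal (u z ^ 2) ∂μ ≤
      K * ∫⁻ z in Ω, ENNReal.ofReal (‖fderiv ℝ u z‖ ^ 2) ∂μ
  have hmono : ∀ A B : Set E, A ⊆ B → Good B → Good A := by
    rintro A B hAB ⟨K, hK⟩
    exact ⟨K, fun u hu => (lintegral_mono_set hAB).trans (hK u hu)⟩
  let S : Set E := {p | ∃ s > 0, Metric.ball p s ⊆ Ω ∧ Good (Metric.ball p s)}
  have hSO : O ⊆ S := by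
    intro p hp
    obtain ⟨s, hs, hb⟩ := Metric.isOpen_iff.1 hO p hp
    exact ⟨s, hs, hb.trans hOΩ, hmono _ _ hb ⟨K, hK⟩⟩
  have hSopen : IsOpen S := by
    rw [Metric.isOpen_iff]
    rintro p ⟨s, hs, hb, hg⟩
    refine ⟨s, hs, fun q hq => ?_⟩
    have hsub : Metric.ball q (s - dist q p) ⊆ Metric.ball p s :=
      Metric.ball_subset_ball' (by linarith)
    exact ⟨s - dist q p, sub_pos.2 hq, hsub.trans hb, hmono _ _ hsub hg⟩
  have hΩS : Ω ⊆ S := by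
    refine hconn.isPreconnected.subset_of_closure_inter_subset hSopen ?_ ?_
    · obtain ⟨p, hp⟩ := hOne
      exact ⟨p, hOΩ hp, hSO hp⟩
    · rintro p ⟨hpc, hpΩ⟩
      obtain ⟨r, hr, hb⟩ := Metric.isOpen_iff.1 hΩ p hpΩ
      obtain ⟨q, hq, hpq⟩ := Metric.mem_closure_iff.1 hpc (r / 2) (by positivity)
      obtain ⟨s', hs', -, hg'⟩ := hq
      let s := min s' (r / 2)
      have hs : 0 < s := by positivity
      have hsr : s ≤ r / 2 := min_le_right _ _
      obtain ⟨K', hK'⟩ := hmono _ _ (Metric.ball_subset_ball (min_le_left s' (r / 2))) hg'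
      refine ⟨s, hs, (Metric.ball_subset_ball (by linarith)).trans hb,
        2 * K' + Real.toNNReal (2 * ‖q - p‖ ^ 2), fun u hu => ?_⟩
      have ht := wp_translate μ Ω hΩ u (hP u hu) (Metric.ball p s) Metric.isOpen_ball.measurableSet
        (q - p) (by
          intro z hz t ht
          apply hb
          rw [Metric.mem_ball, dist_eq_norm] at hz ⊢
          have h1 : z + t • (q - p) - p = (z - p) + t • (q - p) := by abel
          rw [h1]
          have h2 : ‖t • (q - p)‖ ≤ ‖q - p‖ := by
            rw [norm_smul, Real.norm_of_nonneg ht.1]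
            exact mul_le_of_le_one_left (norm_nonneg _) ht.2
          have h3 : ‖q - p‖ < r / 2 := by rwa [← dist_eq_norm, dist_comm]
          linarith [norm_add_le (z - p) (t • (q - p))])
      have htr : ∫⁻ z in Metric.ball p s, ENNReal.ofReal (u (z + (q - p)) ^ 2) ∂μ =
          ∫⁻ z in Metric.ball q s, ENNReal.ofReal (u z ^ 2) ∂μ := by
        rw [← lintegral_indicator Metric.isOpen_ball.measurableSet,
          ← lintegral_indicator Metric.isOpen_ball.measurableSet,
          ← lintegral_add_right_eq_self ((Metric.ball q s).indicator _) (q - p)]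
        congr 1
        ext z
        have : z + (q - p) ∈ Metric.ball q s ↔ z ∈ Metric.ball p s := by
          rw [Metric.mem_ball, Metric.mem_ball, dist_eq_norm, dist_eq_norm,
            show z + (q - p) - q = z - p by abel]
        by_cases hz : z ∈ Metric.ball p s
        · rw [indicator_of_mem hz, indicator_of_mem (this.2 hz)]
        · rw [indicator_of_notMem hz, indicator_of_notMem (fun h => hz (this.1 h))]
      rw [htr] at ht
      refine ht.trans ?_
      push_cast
      rw [add_mul, mul_assoc]
      gcongr
      · exact hK' u hu
      · exact le_rfl
  have hΩS' : ∀ p, p ∈ Ω → ∃ s > 0, Metric.ball p s ⊆ Ω ∧ Good (Metric.ball p s) :=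
    fun p hp => hΩS hp
  choose! s hs hb hg using hΩS'
  choose! k hk using hg
  obtain ⟨T, hTΩ, hTc, hcov⟩ := TopologicalSpace.countable_cover_nhdsWithin (s := Ω)
    (f := fun x => Metric.ball x (s x))
    (fun x hx => mem_nhdsWithin_of_mem_nhds (Metric.ball_mem_nhds x (hs x hx)))
  have : Countable T := hTc.to_subtype
  obtain ⟨δ, hδ, hsum⟩ := ENNReal.exists_pos_tsum_mul_lt_of_countable (ε := 1) one_ne_zero
    (fun i : T => ((k i : ENNReal) + 1)) (fun i => by simp)
  refine ⟨fun z => ∑' i : T, (Metric.ball (i:E) (s i)).indicator (fun _ => (δ i : ENNReal)) z,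
    ?_, ?_, ?_, ?_⟩
  · exact Measurable.ennreal_tsum fun i => measurable_const.indicator Metric.isOpen_ball.measurableSet
  · intro z
    refine le_trans (ENNReal.tsum_le_tsum fun i => ?_) hsum.le
    refine (indicator_le_self' (fun _ _ => zero_le) z).trans ?_
    exact le_mul_of_one_le_left zero_le (by simp)
  · intro z hz
    obtain ⟨x, hx, hzx⟩ := mem_iUnion₂.1 (hcov hz)
    refine lt_of_lt_of_le ?_ (ENNReal.le_tsum (⟨x, hx⟩ : T))
    rw [indicator_of_mem hzx]
    exact_mod_cast hδ _
  · intro u hu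
    have hum : AEMeasurable u (μ.restrict Ω) :=
      (hP u hu).continuousOn.aemeasurable hΩ.measurableSet
    simp_rw [← ENNReal.tsum_mul_right]
    rw [lintegral_tsum]
    swap
    · exact fun i => ((measurable_const.indicator
        Metric.isOpen_ball.measurableSet).aemeasurable.mul
          (ENNReal.measurable_ofReal.comp_aemeasurable (hum.pow_const 2)))
    set I := ∫⁻ z in Ω, ENNReal.ofReal (‖fderiv ℝ u z‖ ^ 2) ∂μ
    calc _ ≤ ∑' i : T, ((k i : ENNReal) + 1) * δ i * I := by
          refine ENNReal.tsum_le_tsum fun i => ?_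
          calc _ ≤ ∫⁻ z, (Metric.ball (i:E) (s i)).indicator
                (fun z => (δ i : ENNReal) * ENNReal.ofReal (u z ^ 2)) z ∂μ := by
                refine (setLIntegral_le_lintegral Ω _).trans (lintegral_mono fun z => ?_)
                by_cases hz : z ∈ Metric.ball (i:E) (s i)
                · simp only [indicator_of_mem hz]; exact le_rfl
                · simp only [indicator_of_notMem hz, zero_mul]; exact le_rfl
            _ = δ i * ∫⁻ z in Metric.ball (i:E) (s i), ENNReal.ofReal (u z ^ 2) ∂μ := by
                rw [lintegral_indicator Metric.isOpen_ball.measurableSet,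
                  lintegral_const_mul' _ _ (by simp)]
            _ ≤ δ i * (((k i : ENNReal) + 1) * I) := by
                gcongr
                refine (hk i (hTΩ i.2) u hu).trans ?_
                gcongr
                exact le_self_add
            _ = _ := by ring
      _ = (∑' i : T, ((k i : ENNReal) + 1) * δ i) * I := ENNReal.tsum_mul_right
      _ ≤ 1 * I := by gcongr
      _ = I := one_mul _
end

/-- Weighted Poincaré inequality: there is a positive, measurable, locally bounded
weight `g`, equal to `1` on the strip `O₁`, and a constant `C > 0` such that
`∫_Ω g |u|² ≤ C ∫_Ω |∇u|²` for all admissible `u`. -/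
theorem weighted_poincare
    (d : ℕ) (hd : 1 ≤ d)
    (η : EuclideanSpace ℝ (Fin d) → ℝ) (hη : Continuous η)
    (h : ℝ) (hh : 0 < h)
    (Ω₂ : Set (EuclideanSpace ℝ (Fin d) × ℝ)) (hΩ₂ : IsOpen Ω₂)
    (hstrip : {p : EuclideanSpace ℝ (Fin d) × ℝ | η p.1 - h ≤ p.2 ∧ p.2 ≤ η p.1} ⊆ Ω₂)
    (Ω : Set (EuclideanSpace ℝ (Fin d) × ℝ))
    (hΩ : Ω = {p : EuclideanSpace ℝ (Fin d) × ℝ | p.2 < η p.1} ∩ Ω₂)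
    (hconn : IsConnected Ω) :
    ∃ g : EuclideanSpace ℝ (Fin d) × ℝ → ℝ, ∃ C > (0 : ℝ),
      Measurable g ∧
      (∀ p ∈ Ω, ∃ M : ℝ, ∀ᶠ q in nhdsWithin p Ω, g q ≤ M) ∧
      (∀ p ∈ Ω, 0 < g p) ∧
      (∀ p ∈ {p : EuclideanSpace ℝ (Fin d) × ℝ | η p.1 - h < p.2 ∧ p.2 < η p.1}, g p = 1) ∧
      ∀ u : EuclideanSpace ℝ (Fin d) × ℝ → ℝ,
        ContDiffOn ℝ 1 u Ω →
        (∫⁻ p in Ω, ENNReal.ofReal (‖fderiv ℝ u p‖ ^ 2)) < ⊤ →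
        (∃ ε ∈ Ioo (0 : ℝ) h, ∀ p ∈ Ω, η p.1 - ε < p.2 → u p = 0) →
        ∫⁻ p in Ω, ENNReal.ofReal (g p * u p ^ 2)
          ≤ ENNReal.ofReal C * ∫⁻ p in Ω, ENNReal.ofReal (‖fderiv ℝ u p‖ ^ 2) := by
  classical
  haveI : (volume : Measure (EuclideanSpace ℝ (Fin d) × ℝ)).IsAddRightInvariant := by
    rw [Measure.volume_eq_prod]
    infer_instance
  have hΩo : IsOpen Ω := by
    rw [hΩ]
    exact (isOpen_lt continuous_snd (hη.comp continuous_fst)).inter hΩ₂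
  set O : Set (EuclideanSpace ℝ (Fin d) × ℝ) := {p | η p.1 - h < p.2 ∧ p.2 < η p.1} with hOdef
  have hOo : IsOpen O :=
    (isOpen_lt ((hη.comp continuous_fst).sub continuous_const) continuous_snd).inter
      (isOpen_lt continuous_snd (hη.comp continuous_fst))
  have hOΩ : O ⊆ Ω := by
    intro p hp
    rw [hΩ]
    exact ⟨hp.2, hstrip ⟨hp.1.le, hp.2.le⟩⟩
  have hOne : O.Nonempty := ⟨(0, η 0 - h / 2), by constructor <;> simp <;> linarith⟩
  let P : (EuclideanSpace ℝ (Fin d) × ℝ → ℝ) → Prop := fun u => ContDiffOn ℝ 1 u Ω ∧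
    ∃ ε ∈ Ioo (0 : ℝ) h, ∀ p ∈ Ω, η p.1 - ε < p.2 → u p = 0
  have hK : ∀ u, P u → ∫⁻ z in O, ENNReal.ofReal (u z ^ 2) ≤
      ((2 * h ^ 2).toNNReal : NNReal) * ∫⁻ z in Ω, ENNReal.ofReal (‖fderiv ℝ u z‖ ^ 2) := by
    rintro u ⟨hu, ε, ⟨hε, hεh⟩, hu0⟩
    set W : Set (EuclideanSpace ℝ (Fin d) × ℝ) := {p | η p.1 - ε < p.2} with hW
    have hWo : IsOpen W :=
      isOpen_lt ((hη.comp continuous_fst).sub continuous_const) continuous_snd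
    set v := Ω.indicator u with hv
    have hvΩ : ∀ p ∈ Ω, v =ᶠ[nhds p] u := fun p hp => by
      filter_upwards [hΩo.mem_nhds hp] with q hq
      exact indicator_of_mem hq u
    have hvW : ∀ p ∈ W, v =ᶠ[nhds p] fun _ => 0 := fun p hp => by
      filter_upwards [hWo.mem_nhds hp] with q hq
      by_cases hq' : q ∈ Ω
      · rw [hv, indicator_of_mem hq', hu0 q hq' hq]
      · rw [hv, indicator_of_notMem hq']
    have hvC : ContDiffOn ℝ 1 v (Ω ∪ W) := by
      rintro p (hp | hp)
      · exact ((hu.contDiffAt (hΩo.mem_nhds hp)).congr_of_eventuallyEq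
          (hvΩ p hp)).contDiffWithinAt
      · exact (contDiffAt_const.congr_of_eventuallyEq (hvW p hp)).contDiffWithinAt
    have ht := wp_translate volume (Ω ∪ W) (hΩo.union hWo) v hvC O hOo.measurableSet
      ((0 : EuclideanSpace ℝ (Fin d)), h) (by
        rintro ⟨x, y⟩ ⟨h1, h2⟩ t ⟨ht0, ht1⟩
        simp only at h1 h2
        by_cases hc : y + t * h < η x
        · left
          apply hOΩ
          simp only [hOdef, mem_ofPred_eq, Prod.smul_mk, smul_zero, Prod.mk_add_mk, add_zero,
            smul_eq_mul]
          exact ⟨by nlinarith, hc⟩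
        · right
          simp only [hW, mem_ofPred_eq, Prod.smul_mk, smul_zero, Prod.mk_add_mk, add_zero,
            smul_eq_mul]
          linarith)
    have e1 : ∫⁻ z in O, ENNReal.ofReal (v z ^ 2) = ∫⁻ z in O, ENNReal.ofReal (u z ^ 2) :=
      setLIntegral_congr_fun hOo.measurableSet fun z hz => by
        simp only [hv, indicator_of_mem (hOΩ hz)]
    have e2 : ∫⁻ z in O, ENNReal.ofReal (v (z + ((0 : EuclideanSpace ℝ (Fin d)), h)) ^ 2) = 0 := by
      rw [setLIntegral_congr_fun (g := fun _ => 0) hOo.measurableSet]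
      · simp
      · rintro ⟨x, y⟩ ⟨h1, h2⟩
        simp only at h1 h2
        have : ((x, y) + ((0 : EuclideanSpace ℝ (Fin d)), h)) ∈ W := by
          simp only [hW, mem_ofPred_eq, Prod.mk_add_mk, add_zero]
          linarith
        simp only [(hvW _ this).eq_of_nhds]
        simp
    have e3 : ∫⁻ z in Ω ∪ W, ENNReal.ofReal (‖fderiv ℝ v z‖ ^ 2) ≤
        ∫⁻ z in Ω, ENNReal.ofReal (‖fderiv ℝ u z‖ ^ 2) := by
      rw [← lintegral_indicator (hΩo.union hWo).measurableSet,
        ← lintegral_indicator hΩo.measurableSet]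
      refine lintegral_mono fun z => ?_
      by_cases hz : z ∈ Ω
      · simp only [indicator_of_mem hz, indicator_of_mem (mem_union_left W hz),
          (hvΩ z hz).fderiv_eq]
        exact le_rfl
      · by_cases hzW : z ∈ W
        · have h0 : fderiv ℝ v z = 0 := by
            rw [(hvW z hzW).fderiv_eq]; simp
          simp only [indicator_of_mem (mem_union_right Ω hzW), h0]
          simp
        · rw [indicator_of_notMem (by simp [hz, hzW])]
          exact zero_le
    have e4 : ‖((0 : EuclideanSpace ℝ (Fin d)), h)‖ = h := by
      simp [Prod.norm_mk, abs_of_pos hh, hh.le]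
    rw [e1, e2, mul_zero, zero_add, e4] at ht
    refine ht.trans ?_
    exact mul_le_mul' le_rfl e3
  obtain ⟨G, hGm, hG1, hGpos, hG⟩ := wp_weight volume Ω hΩo hconn P (fun u hu => hu.1) O hOo hOne
    hOΩ _ hK
  refine ⟨fun p => if p ∈ O then 1 else (G p).toReal, 2 * h ^ 2 + 1, by positivity, ?_, ?_, ?_, ?_, ?_⟩
  · exact Measurable.ite hOo.measurableSet measurable_const hGm.ennreal_toReal
  · intro p _
    refine ⟨1, Filter.Eventually.of_forall fun q => ?_⟩
    simp only
    split_ifs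
    · exact le_rfl
    · exact ENNReal.toReal_le_of_le_ofReal zero_le_one (by simpa using hG1 q)
  · intro p hp
    simp only
    split_ifs
    · exact one_pos
    · exact ENNReal.toReal_pos (hGpos p hp).ne' (ne_top_of_le_ne_top ENNReal.one_ne_top (hG1 p))
  · intro p hp
    exact if_pos hp
  · intro u hu _ hu0
    have hPu : P u := ⟨hu, hu0⟩
    have hum : AEMeasurable u (volume.restrict Ω) :=
      hu.continuousOn.aemeasurable hΩo.measurableSet
    calc _ ≤ ∫⁻ p in Ω, (O.indicator (fun p => ENNReal.ofReal (u p ^ 2)) p +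
            G p * ENNReal.ofReal (u p ^ 2)) := by
          refine lintegral_mono fun p => ?_
          by_cases hp : p ∈ O
          · simp only [if_pos hp, indicator_of_mem hp, one_mul]
            exact le_self_add
          · simp only [if_neg hp, indicator_of_notMem hp, zero_add]
            rw [ENNReal.ofReal_mul ENNReal.toReal_nonneg,
              ENNReal.ofReal_toReal (ne_top_of_le_ne_top ENNReal.one_ne_top (hG1 p))]
      _ = (∫⁻ p in Ω, O.indicator (fun p => ENNReal.ofReal (u p ^ 2)) p) +
            ∫⁻ p in Ω, G p * ENNReal.ofReal (u p ^ 2) :=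
          lintegral_add_right' _ (hGm.aemeasurable.mul
            (ENNReal.measurable_ofReal.comp_aemeasurable (hum.pow_const 2)))
      _ ≤ (∫⁻ p in O, ENNReal.ofReal (u p ^ 2)) +
            ∫⁻ p in Ω, G p * ENNReal.ofReal (u p ^ 2) := by
          refine add_le_add ?_ le_rfl
          rw [← lintegral_indicator hOo.measurableSet]
          exact setLIntegral_le_lintegral Ω _
      _ ≤ _ := add_le_add (hK u hPu) (hG u hPu)
      _ = _ := by
          rw [ENNReal.ofReal_add (by positivity) zero_le_one, ENNReal.ofReal_one, add_mul, one_mul]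
          rfl
end

section
/- For every d ≥ 1, every x ∈ ℝ^d and every ξ ≠ 0 one has Im λ⁽⁰⁾(x,ξ) = −(1/2) Σ_{j=1}^d ∂_{ξ_j}∂_{x_j} λ⁽¹⁾(x,ξ). -/
/-- Partial derivative of `f` at `x` in the `j`-th coordinate direction. -/
noncomputable def pd {d : ℕ} {F : Type*} [NormedAddCommGroup F] [NormedSpace ℝ F]
    (j : Fin d) (f : EuclideanSpace ℝ (Fin d) → F) (x : EuclideanSpace ℝ (Fin d)) : F :=
  fderiv ℝ f x (EuclideanSpace.single j 1)

/-- The principal symbol of the Dirichlet–Neumann operator. -/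
noncomputable def lam1 {d : ℕ} (η : EuclideanSpace ℝ (Fin d) → ℝ)
    (x ξ : EuclideanSpace ℝ (Fin d)) : ℝ :=
  Real.sqrt ((1 + ∑ j, (pd j η x) ^ 2) * ‖ξ‖ ^ 2 - (∑ j, pd j η x * ξ j) ^ 2)

noncomputable def alpha1 {d : ℕ} (η : EuclideanSpace ℝ (Fin d) → ℝ)
    (x ξ : EuclideanSpace ℝ (Fin d)) : ℂ :=
  ((lam1 η x ξ : ℂ) + Complex.I * ((∑ j, pd j η x * ξ j : ℝ) : ℂ))
    / ((1 + ∑ j, (pd j η x) ^ 2 : ℝ) : ℂ)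

/-- The sub-principal symbol of the Dirichlet–Neumann operator. -/
noncomputable def lam0 {d : ℕ} (η : EuclideanSpace ℝ (Fin d) → ℝ)
    (x ξ : EuclideanSpace ℝ (Fin d)) : ℂ :=
  ((1 + ∑ j, (pd j η x) ^ 2 : ℝ) : ℂ) / (2 * (lam1 η x ξ : ℂ)) *
    ((∑ j, pd j (fun x' => alpha1 η x' ξ * ((pd j η x' : ℝ) : ℂ)) x)
      + Complex.I * ∑ j, ((pd j (fun ξ' => lam1 η x ξ') ξ : ℝ) : ℂ)
          * pd j (fun x' => alpha1 η x' ξ) x)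

section DNaux
open Finset

variable {d : ℕ}

lemma dn_pos (g : Fin d → ℝ) (ξ : EuclideanSpace ℝ (Fin d)) (hξ : ξ ≠ 0) :
    0 < (1 + ∑ j, (g j) ^ 2) * ‖ξ‖ ^ 2 - (∑ j, g j * ξ j) ^ 2 := by
  have h1 := Finset.sum_mul_sq_le_sq_mul_sq Finset.univ g (fun j => ξ j)
  have h2 : ‖ξ‖ ^ 2 = ∑ j, ξ j ^ 2 := EuclideanSpace.real_norm_sq_eq ξ
  have h3 : 0 < ‖ξ‖ ^ 2 := by positivity
  rw [← h2] at h1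
  nlinarith

lemma dn_pd {F : Type*} [NormedAddCommGroup F] [NormedSpace ℝ F] {f : EuclideanSpace ℝ (Fin d) → F}
    {L : EuclideanSpace ℝ (Fin d) →L[ℝ] F} {x : EuclideanSpace ℝ (Fin d)}
    (h : HasFDerivAt f L x) (j : Fin d) : pd j f x = L (EuclideanSpace.single j 1) := by
  rw [pd, h.fderiv]

lemma dn_diff (η : EuclideanSpace ℝ (Fin d) → ℝ) (hη : ContDiff ℝ 2 η) (k : Fin d) :
    Differentiable ℝ (fun x => pd k η x) := by
  have h : ContDiff ℝ 1 (fderiv ℝ η) := hη.fderiv_right (by norm_num)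
  have h2 := h.differentiable (by norm_num)
  unfold pd
  fun_prop

lemma dn_cplx {a b : EuclideanSpace ℝ (Fin d) → ℝ} {A B : EuclideanSpace ℝ (Fin d) →L[ℝ] ℝ}
    {x : EuclideanSpace ℝ (Fin d)} (ha : HasFDerivAt a A x) (hb : HasFDerivAt b B x) (j : Fin d) :
    pd j (fun x => (a x : ℂ) + Complex.I * (b x : ℂ)) x
      = (A (EuclideanSpace.single j 1) : ℂ) + Complex.I * (B (EuclideanSpace.single j 1) : ℂ) := by
  have h1 := Complex.ofRealCLM.hasFDerivAt.comp x ha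
  have h2 := (Complex.ofRealCLM.hasFDerivAt.comp x hb).const_mul Complex.I
  refine (dn_pd (h1.add h2) j).trans ?_
  simp

/-- derivative of the radical in x -/
lemma dn_G (η : EuclideanSpace ℝ (Fin d) → ℝ) (hη : ContDiff ℝ 2 η)
    (x : EuclideanSpace ℝ (Fin d)) :
    ∃ L : EuclideanSpace ℝ (Fin d) →L[ℝ] ℝ,
      HasFDerivAt (fun x => 1 + ∑ j, (pd j η x) ^ 2) L x ∧
      ∀ j, L (EuclideanSpace.single j 1) = 2 * ∑ k, pd k η x * pd j (fun x => pd k η x) x := by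
  have hg : ∀ k, HasFDerivAt (fun x => pd k η x) (fderiv ℝ (fun x => pd k η x) x) x :=
    fun k => (dn_diff η hη k x).hasFDerivAt
  refine ⟨_, (HasFDerivAt.fun_sum (u := Finset.univ) fun k _ => (hg k).pow 2).const_add 1, ?_⟩
  intro j
  simp [pd, Finset.mul_sum, mul_assoc]

lemma dn_s (η : EuclideanSpace ℝ (Fin d) → ℝ) (hη : ContDiff ℝ 2 η)
    (x ξ : EuclideanSpace ℝ (Fin d)) :
    ∃ L : EuclideanSpace ℝ (Fin d) →L[ℝ] ℝ,
      HasFDerivAt (fun x => ∑ j, pd j η x * ξ j) L x ∧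
      ∀ j, L (EuclideanSpace.single j 1) = ∑ k, ξ k * pd j (fun x => pd k η x) x := by
  have hg : ∀ k, HasFDerivAt (fun x => pd k η x) (fderiv ℝ (fun x => pd k η x) x) x :=
    fun k => (dn_diff η hη k x).hasFDerivAt
  refine ⟨_, (HasFDerivAt.fun_sum (u := Finset.univ) fun k _ => (hg k).mul_const (ξ k)), ?_⟩
  intro j
  simp [pd]

lemma dn_lam_pos (η : EuclideanSpace ℝ (Fin d) → ℝ)
    (x ξ : EuclideanSpace ℝ (Fin d)) (hξ : ξ ≠ 0) : 0 < lam1 η x ξ :=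
  Real.sqrt_pos.2 (dn_pos (fun j => pd j η x) ξ hξ)

lemma dn_lamx (η : EuclideanSpace ℝ (Fin d) → ℝ) (hη : ContDiff ℝ 2 η)
    (x ξ : EuclideanSpace ℝ (Fin d)) (hξ : ξ ≠ 0) :
    ∃ L : EuclideanSpace ℝ (Fin d) →L[ℝ] ℝ,
      HasFDerivAt (fun x => lam1 η x ξ) L x ∧
      ∀ j, L (EuclideanSpace.single j 1) =
        ((∑ k, pd k η x * pd j (fun x => pd k η x) x) * ‖ξ‖ ^ 2
          - (∑ k, pd k η x * ξ k) * ∑ k, ξ k * pd j (fun x => pd k η x) x) / lam1 η x ξ := by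
  obtain ⟨A, hA, hA'⟩ := dn_G η hη x
  obtain ⟨B, hB, hB'⟩ := dn_s η hη x ξ
  have hp := dn_pos (fun j => pd j η x) ξ hξ
  refine ⟨_, ((hA.mul_const (‖ξ‖ ^ 2)).sub (hB.pow 2)).sqrt hp.ne', ?_⟩
  intro j
  have hl := dn_lam_pos η x ξ hξ
  simp [hA', hB']
  change ((lam1 η x ξ)⁻¹ * _) * _ = _
  field_simp

lemma dn_sxi (g : Fin d → ℝ) (ξ : EuclideanSpace ℝ (Fin d)) :
    ∃ L : EuclideanSpace ℝ (Fin d) →L[ℝ] ℝ,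
      HasFDerivAt (fun ξ : EuclideanSpace ℝ (Fin d) => ∑ j, g j * ξ j) L ξ ∧
      ∀ j, L (EuclideanSpace.single j 1) = g j := by
  refine ⟨∑ k, g k • (EuclideanSpace.proj k : EuclideanSpace ℝ (Fin d) →L[ℝ] ℝ), ?_, ?_⟩
  · refine HasFDerivAt.fun_sum fun k _ => ?_
    exact (EuclideanSpace.proj k : EuclideanSpace ℝ (Fin d) →L[ℝ] ℝ).hasFDerivAt.const_mul (g k)
  · intro j
    simp

lemma dn_lamxi (η : EuclideanSpace ℝ (Fin d) → ℝ)
    (x ξ : EuclideanSpace ℝ (Fin d)) (hξ : ξ ≠ 0) :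
    ∃ L : EuclideanSpace ℝ (Fin d) →L[ℝ] ℝ,
      HasFDerivAt (fun ξ => lam1 η x ξ) L ξ ∧
      ∀ j, L (EuclideanSpace.single j 1) =
        ((1 + ∑ k, (pd k η x) ^ 2) * ξ j - (∑ k, pd k η x * ξ k) * pd j η x) / lam1 η x ξ := by
  have hp := dn_pos (fun j => pd j η x) ξ hξ
  have hN : HasFDerivAt (fun ξ : EuclideanSpace ℝ (Fin d) => ‖ξ‖ ^ 2) (2 • (innerSL ℝ ξ)) ξ :=
    (hasStrictFDerivAt_norm_sq ξ).hasFDerivAt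
  obtain ⟨S, hS, hS'⟩ := dn_sxi (fun j => pd j η x) ξ
  refine ⟨_, ((hN.const_mul (1 + ∑ k, (pd k η x) ^ 2)).sub (hS.pow 2)).sqrt hp.ne', ?_⟩
  intro j
  have hl := dn_lam_pos η x ξ hξ
  simp [hS', EuclideanSpace.inner_single_right]
  change ((lam1 η x ξ)⁻¹ * _) * _ = _
  field_simp

lemma dn_mixed (η : EuclideanSpace ℝ (Fin d) → ℝ) (hη : ContDiff ℝ 2 η)
    (x ξ : EuclideanSpace ℝ (Fin d)) (hξ : ξ ≠ 0) (j : Fin d) :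
    pd j (fun ξ' => pd j (fun x' => lam1 η x' ξ') x) ξ =
      (2 * (∑ k, pd k η x * pd j (fun x => pd k η x) x) * ξ j
        - pd j η x * (∑ k, ξ k * pd j (fun x => pd k η x) x)
        - (∑ k, pd k η x * ξ k) * pd j (fun x => pd j η x) x) / lam1 η x ξ
      - ((∑ k, pd k η x * pd j (fun x => pd k η x) x) * ‖ξ‖ ^ 2
          - (∑ k, pd k η x * ξ k) * ∑ k, ξ k * pd j (fun x => pd k η x) x)
        * ((1 + ∑ k, (pd k η x) ^ 2) * ξ j - (∑ k, pd k η x * ξ k) * pd j η x)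
          / lam1 η x ξ ^ 3 := by
  have hl := dn_lam_pos η x ξ hξ
  have hev : (fun ξ' => pd j (fun x' => lam1 η x' ξ') x) =ᶠ[nhds ξ] fun ξ' =>
      ((∑ k, pd k η x * pd j (fun x => pd k η x) x) * ‖ξ'‖ ^ 2
          - (∑ k, pd k η x * ξ' k) * ∑ k, pd j (fun x => pd k η x) x * ξ' k) * (lam1 η x ξ')⁻¹ := by
    filter_upwards [isOpen_ne.mem_nhds hξ] with ξ' h'
    obtain ⟨L, hL, hL'⟩ := dn_lamx η hη x ξ' h'
    rw [dn_pd hL, hL', div_eq_mul_inv]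
    simp only [mul_comm]
  rw [pd, hev.fderiv_eq]
  have hN : HasFDerivAt (fun ξ : EuclideanSpace ℝ (Fin d) => ‖ξ‖ ^ 2) (2 • (innerSL ℝ ξ)) ξ :=
    (hasStrictFDerivAt_norm_sq ξ).hasFDerivAt
  obtain ⟨S, hS, hS'⟩ := dn_sxi (fun j => pd j η x) ξ
  obtain ⟨T, hT, hT'⟩ := dn_sxi (fun k => pd j (fun x => pd k η x) x) ξ
  obtain ⟨L, hL, hL'⟩ := dn_lamxi η x ξ hξ
  have hi := (hasDerivAt_inv hl.ne').comp_hasFDerivAt ξ hL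
  have := ((hN.const_mul (∑ k, pd k η x * pd j (fun x => pd k η x) x)).sub (hS.mul hT)).mul hi
  refine (dn_pd this j).trans ?_
  have hc : ∑ k, pd j (fun x => pd k η x) x * ξ k = ∑ k, ξ k * pd j (fun x => pd k η x) x := by
    simp only [mul_comm]
  simp [hS', hT', hL', hc, EuclideanSpace.inner_single_right]
  field_simp
  ring

lemma dn_quot {a b : EuclideanSpace ℝ (Fin d) → ℝ} {A B : EuclideanSpace ℝ (Fin d) →L[ℝ] ℝ}
    {x : EuclideanSpace ℝ (Fin d)} (ha : HasFDerivAt a A x) (hb : HasFDerivAt b B x)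
    (h : b x ≠ 0) :
    ∃ L : EuclideanSpace ℝ (Fin d) →L[ℝ] ℝ, HasFDerivAt (fun x => a x / b x) L x ∧
      ∀ v, L v = A v / b x - a x * B v / b x ^ 2 := by
  have hi := (hasDerivAt_inv h).comp_hasFDerivAt x hb
  refine ⟨_, by simp only [div_eq_mul_inv]; exact ha.mul hi, ?_⟩
  intro v
  simp
  field_simp
  ring

lemma dn_alg (g ξ : Fin d → ℝ) (H : Fin d → Fin d → ℝ)
    (G s N l : ℝ) (hG : G ≠ 0) (hl : l ≠ 0) :
    G / (2 * l) * (∑ j, (((∑ k, ξ k * H j k) / G - s * (2 * ∑ k, g k * H j k) / G ^ 2) * g j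
        + s / G * H j j)
      + ∑ j, (G * ξ j - s * g j) / l * (((∑ k, g k * H j k) * N - s * ∑ k, ξ k * H j k) / l / G
          - l * (2 * ∑ k, g k * H j k) / G ^ 2))
    = -(1 / 2) * ∑ j, ((2 * (∑ k, g k * H j k) * ξ j - g j * (∑ k, ξ k * H j k) - s * H j j) / l
      - ((∑ k, g k * H j k) * N - s * ∑ k, ξ k * H j k) * (G * ξ j - s * g j) / l ^ 3) := by
  rw [← Finset.sum_add_distrib, Finset.mul_sum, Finset.mul_sum]
  refine Finset.sum_congr rfl fun j _ => ?_
  generalize (∑ k, g k * H j k) = p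
  generalize (∑ k, ξ k * H j k) = q
  field_simp
  ring

end DNaux

/-- The identity `Im λ⁽⁰⁾ = −(1/2) Σ_j ∂_{ξ_j}∂_{x_j} λ⁽¹⁾`, reflecting the symmetry of the
Dirichlet–Neumann operator. -/
theorem im_subprincipal_symbol
    (d : ℕ) (hd : 1 ≤ d)
    (η : EuclideanSpace ℝ (Fin d) → ℝ) (hη : ContDiff ℝ 2 η) :
    ∀ (x ξ : EuclideanSpace ℝ (Fin d)), ξ ≠ 0 →
      (lam0 η x ξ).im
        = -(1 / 2) * ∑ j, pd j (fun ξ' => pd j (fun x' => lam1 η x' ξ') x) ξ := by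
  intro x ξ hξ
  have hl := dn_lam_pos η x ξ hξ
  have hGp : ∀ y, (1 + ∑ j, (pd j η y) ^ 2 : ℝ) ≠ 0 := fun y => by positivity
  obtain ⟨A, hA, hA'⟩ := dn_G η hη x
  obtain ⟨B, hB, hB'⟩ := dn_s η hη x ξ
  obtain ⟨C, hC, hC'⟩ := dn_lamx η hη x ξ hξ
  obtain ⟨P, hP, hP'⟩ := dn_quot hC hA (hGp x)
  obtain ⟨Q, hQ, hQ'⟩ := dn_quot hB hA (hGp x)
  obtain ⟨X, hX, hX'⟩ := dn_lamxi η x ξ hξ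
  have hal : ∀ y, alpha1 η y ξ = ((lam1 η y ξ / (1 + ∑ j, (pd j η y) ^ 2) : ℝ) : ℂ)
      + Complex.I * (((∑ j, pd j η y * ξ j) / (1 + ∑ j, (pd j η y) ^ 2) : ℝ) : ℂ) := by
    intro y
    rw [alpha1, Complex.ofReal_div, Complex.ofReal_div]
    ring
  have h1 : ∀ j, pd j (fun x' => alpha1 η x' ξ) x = (P (EuclideanSpace.single j 1) : ℂ)
      + Complex.I * (Q (EuclideanSpace.single j 1) : ℂ) := by
    intro j
    simp only [hal]
    exact dn_cplx hP hQ j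
  have h2 : ∀ j, (pd j (fun x' => alpha1 η x' ξ * ((pd j η x' : ℝ) : ℂ)) x).im =
      Q (EuclideanSpace.single j 1) * pd j η x
        + (∑ j, pd j η x * ξ j) / (1 + ∑ j, (pd j η x) ^ 2) * pd j (fun x => pd j η x) x := by
    intro j
    have hg := (dn_diff η hη j x).hasFDerivAt
    have := dn_cplx (hP.mul hg) (hQ.mul hg) j
    have he : (fun x' => alpha1 η x' ξ * ((pd j η x' : ℝ) : ℂ)) = fun x' =>
      ((lam1 η x' ξ / (1 + ∑ j, (pd j η x') ^ 2) * pd j η x' : ℝ) : ℂ)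
      + Complex.I * (((∑ j, pd j η x' * ξ j) / (1 + ∑ j, (pd j η x') ^ 2) * pd j η x' : ℝ) : ℂ) := by
      funext y
      rw [hal, Complex.ofReal_mul, Complex.ofReal_mul]
      ring
    rw [he]
    refine (congrArg Complex.im this).trans ?_
    have : fderiv ℝ (fun x => pd j η x) x (EuclideanSpace.single j 1)
      = pd j (fun x => pd j η x) x := rfl
    rw [Complex.add_im, Complex.I_mul_im, Complex.ofReal_im, Complex.ofReal_re, zero_add]
    change _ * fderiv ℝ (fun x => pd j η x) x (EuclideanSpace.single j 1)
      + pd j η x * Q (EuclideanSpace.single j 1) = _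
    rw [this]
    ring
  have h3 : (lam0 η x ξ).im = (1 + ∑ j, (pd j η x) ^ 2) / (2 * lam1 η x ξ) *
      (∑ j, (Q (EuclideanSpace.single j 1) * pd j η x
        + (∑ j, pd j η x * ξ j) / (1 + ∑ j, (pd j η x) ^ 2) * pd j (fun x => pd j η x) x)
      + ∑ j, X (EuclideanSpace.single j 1) * P (EuclideanSpace.single j 1)) := by
    have hre : ((1 + ∑ j, (pd j η x) ^ 2 : ℝ) : ℂ) / (2 * (lam1 η x ξ : ℂ))
      = (((1 + ∑ j, (pd j η x) ^ 2) / (2 * lam1 η x ξ) : ℝ) : ℂ) := by push_cast; rfl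
    rw [lam0, hre, Complex.im_ofReal_mul, Complex.add_im, Complex.im_sum]
    simp only [h2]
    congr 2
    rw [Complex.I_mul_im, Complex.re_sum]
    refine Finset.sum_congr rfl fun j _ => ?_
    rw [h1, dn_pd hX]
    simp
  rw [h3]
  simp only [hQ', hP', hX', hA', hB', hC', dn_mixed η hη x ξ hξ]
  exact dn_alg (fun j => pd j η x) (fun j => ξ j) (fun j k => pd j (fun x => pd k η x) x) _ _ _ _ (hGp x) hl.ne'
end

section
/- Let c₀ > 0 and δ > 0. There exist a function a : ℝ × (ℝ \ {0}) → ℝ and a constant K > 0 such that: a is C^∞, a is homogeneous of degree 0 in ξ (a(x, sξ) = a(x,ξ) for all s > 0), all derivatives ∂_x^j ∂_ξ^k a are bounded on ℝ × {ξ : |ξ| = 1}, and for every differentiable function c : ℝ → ℝ with c(x) ≥ c₀ for all x, one has {c(x)|ξ|^{3/2}, a}(x,ξ) ≥ K ⟨x⟩^{−1−δ} |ξ|^{1/2} for all x ∈ ℝ and all ξ ≠ 0. -/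
/-- The operator `∂_x` acting on symbols of `(x,ξ) ∈ ℝ × ℝ`. -/
noncomputable def pdX (f : ℝ → ℝ → ℝ) : ℝ → ℝ → ℝ :=
  fun x ξ => deriv (fun x' => f x' ξ) x

/-- The operator `∂_ξ` acting on symbols of `(x,ξ) ∈ ℝ × ℝ`. -/
noncomputable def pdXi (f : ℝ → ℝ → ℝ) : ℝ → ℝ → ℝ :=
  fun x ξ => deriv (fun ξ' => f x ξ') ξ

open Real Filter Topology MeasureTheory

theorem aux_hasDeriv (m : ℕ) (r x : ℝ) :
    HasDerivAt (fun x : ℝ => x ^ m * (1 + x ^ 2) ^ (-r))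
      ((m : ℝ) * (x ^ (m - 1) * (1 + x ^ 2) ^ (-r))
        + (-(2 * r)) * (x ^ (m + 1) * (1 + x ^ 2) ^ (-(r + 1)))) x := by
  have hp : (0 : ℝ) < 1 + x ^ 2 := by positivity
  have h1 : HasDerivAt (fun x : ℝ => 1 + x ^ 2) (2 * x) x := by
    simpa using (hasDerivAt_pow 2 x).const_add 1
  have h2 := h1.rpow_const (p := -r) (Or.inl hp.ne')
  have h3 := (hasDerivAt_pow m x).mul h2
  refine h3.congr_deriv ?_
  rw [show -(r + 1) = -r - 1 by ring]
  ring

theorem aux_smooth (m : ℕ) (r : ℝ) (n : WithTop ℕ∞) :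
    ContDiff ℝ n (fun x : ℝ => x ^ m * (1 + x ^ 2) ^ (-r)) := by
  refine (contDiff_id.pow m).mul ?_
  refine ContDiff.rpow_const_of_ne (by fun_prop) ?_
  intro x
  positivity

theorem aux_bound0 (m : ℕ) (r : ℝ) (h : (m : ℝ) ≤ 2 * r) (x : ℝ) :
    |x ^ m * (1 + x ^ 2) ^ (-r)| ≤ 1 := by
  have hp : (0 : ℝ) < 1 + x ^ 2 := by positivity
  rw [abs_mul, abs_of_pos (rpow_pos_of_pos hp _), rpow_neg hp.le, ← div_eq_mul_inv,
    div_le_one (rpow_pos_of_pos hp _), abs_pow]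
  have h1 : |x| ≤ (1 + x ^ 2) ^ ((1 : ℝ) / 2) := by
    rw [← sqrt_eq_rpow]
    exact abs_le_sqrt (by linarith)
  calc |x| ^ m ≤ ((1 + x ^ 2) ^ ((1 : ℝ) / 2)) ^ m := by gcongr
    _ = (1 + x ^ 2) ^ ((1 : ℝ) / 2 * m) := by rw [rpow_mul hp.le, rpow_natCast]
    _ ≤ _ := rpow_le_rpow_of_exponent_le (by nlinarith) (by linarith)

theorem aux_bound (n : ℕ) : ∀ (m : ℕ) (r : ℝ), (m : ℝ) ≤ 2 * r →
    ∃ M : ℝ, ∀ x, |iteratedDeriv n (fun x : ℝ => x ^ m * (1 + x ^ 2) ^ (-r)) x| ≤ M := by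
  induction n with
  | zero =>
    intro m r h
    exact ⟨1, fun x => by simpa using aux_bound0 m r h x⟩
  | succ n ih =>
    intro m r h
    have hm : ((m - 1 : ℕ) : ℝ) ≤ m := by exact_mod_cast Nat.sub_le m 1
    obtain ⟨M1, h1⟩ := ih (m - 1) r (by linarith)
    obtain ⟨M2, h2⟩ := ih (m + 1) (r + 1) (by push_cast; linarith)
    refine ⟨(m : ℝ) * M1 + |-(2 * r)| * M2, fun x => ?_⟩
    have hd : deriv (fun x : ℝ => x ^ m * (1 + x ^ 2) ^ (-r)) =
      (fun x => (m : ℝ) * (x ^ (m - 1) * (1 + x ^ 2) ^ (-r)))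
        + (fun x => (-(2 * r)) * (x ^ (m + 1) * (1 + x ^ 2) ^ (-(r + 1)))) := by
      funext x
      exact (aux_hasDeriv m r x).deriv
    rw [iteratedDeriv_succ', hd, iteratedDeriv_add
      (contDiff_const.mul (aux_smooth _ _ _)).contDiffAt
      (contDiff_const.mul (aux_smooth _ _ _)).contDiffAt,
      iteratedDeriv_const_mul_field, iteratedDeriv_const_mul_field]
    refine (abs_add_le _ _).trans ?_
    rw [abs_mul, abs_mul, abs_of_nonneg (Nat.cast_nonneg m)]
    gcongr
    · exact h1 x
    · exact h2 x

theorem aux_F (δ : ℝ) (hδ : 0 < δ) : ∃ F : ℝ → ℝ,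
    (∀ x, HasDerivAt F ((1 + x ^ 2) ^ (-((1 + δ) / 2))) x) ∧ ContDiff ℝ (⊤ : ℕ∞) F ∧
    ∀ n, ∃ M : ℝ, ∀ x, |iteratedDeriv n F x| ≤ M := by
  set g : ℝ → ℝ := fun x => (1 + x ^ 2) ^ (-((1 + δ) / 2)) with hg
  have hg0 : g = fun x : ℝ => x ^ 0 * (1 + x ^ 2) ^ (-((1 + δ) / 2)) := by
    funext x; simp [hg]
  have hgs : ContDiff ℝ (⊤ : ℕ∞) g := by rw [hg0]; exact aux_smooth _ _ _
  have hgi : Integrable g := by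
    have := integrable_rpow_neg_one_add_norm_sq (E := ℝ) (μ := volume) (r := 1 + δ)
      (by simpa using hδ)
    refine this.congr (Eventually.of_forall fun x => ?_)
    simp only [hg, neg_div, Real.norm_eq_abs, sq_abs]
  have hF : ∀ x, HasDerivAt (fun x => ∫ t in (0 : ℝ)..x, g t) (g x) x := fun x =>
    intervalIntegral.integral_hasDerivAt_right (hgs.continuous.intervalIntegrable _ _)
      hgs.continuous.stronglyMeasurable.stronglyMeasurableAtFilter hgs.continuous.continuousAt
  have hd : deriv (fun x => ∫ t in (0 : ℝ)..x, g t) = g := funext fun x => (hF x).deriv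
  refine ⟨fun x => ∫ t in (0 : ℝ)..x, g t, hF, ?_, ?_⟩
  · rw [contDiff_infty_iff_deriv, hd]
    exact ⟨fun x => (hF x).differentiableAt, hgs⟩
  · intro n
    cases n with
    | zero =>
      refine ⟨∫ t, ‖g t‖, fun x => ?_⟩
      rw [iteratedDeriv_zero, ← Real.norm_eq_abs]
      refine (intervalIntegral.norm_integral_le_integral_norm_uIoc).trans ?_
      exact setIntegral_le_integral hgi.norm (Eventually.of_forall fun _ => norm_nonneg _)
    | succ n =>
      rw [iteratedDeriv_succ', hd, hg0]
      exact aux_bound n 0 _ (by push_cast; linarith)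

theorem aux_sign_ev (ξ : ℝ) (h : ξ ≠ 0) : Real.sign =ᶠ[𝓝 ξ] fun _ => Real.sign ξ := by
  rcases lt_or_gt_of_ne h with h | h
  · filter_upwards [gt_mem_nhds h] with y hy
    rw [Real.sign_of_neg hy, Real.sign_of_neg h]
  · filter_upwards [lt_mem_nhds h] with y hy
    rw [Real.sign_of_pos hy, Real.sign_of_pos h]

theorem aux_sign_deriv (ξ : ℝ) : deriv Real.sign ξ = 0 := by
  by_cases h : ξ = 0
  · subst h
    apply deriv_zero_of_not_differentiableAt
    intro hd
    have h1 : Tendsto Real.sign (𝓝[>] 0) (𝓝 0) := by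
      have := hd.continuousAt.tendsto.mono_left (nhdsWithin_le_nhds (s := Set.Ioi 0))
      simpa using this
    have h2 : Tendsto Real.sign (𝓝[>] 0) (𝓝 1) := by
      refine tendsto_const_nhds.congr' ?_
      filter_upwards [self_mem_nhdsWithin] with y hy
      exact (Real.sign_of_pos hy).symm
    exact zero_ne_one (tendsto_nhds_unique h1 h2)
  · rw [(aux_sign_ev ξ h).deriv_eq, deriv_const]

theorem aux_abs_deriv (c ξ : ℝ) (h : ξ ≠ 0) :
    deriv (fun ξ' => c * |ξ'| ^ ((3 : ℝ) / 2)) ξ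
      = c * (Real.sign ξ * (3 / 2) * |ξ| ^ ((1 : ℝ) / 2)) := by
  have h0 : HasDerivAt (fun y : ℝ => |y|) (Real.sign ξ) ξ := by
    rcases lt_or_gt_of_ne h with h | h
    · rw [Real.sign_of_neg h]; exact hasDerivAt_abs_neg h
    · rw [Real.sign_of_pos h]; exact hasDerivAt_abs_pos h
  have h1 := (h0.rpow_const (p := (3 : ℝ) / 2) (Or.inl (abs_pos.2 h).ne')).const_mul c
  rw [h1.deriv]
  norm_num

theorem aux_iter0 (k : ℕ) : pdXi^[k] (fun _ _ => 0) = fun _ _ => 0 := by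
  apply Function.iterate_fixed
  funext x ξ
  simp [pdXi]

theorem aux_iter0X (k : ℕ) : pdX^[k] (fun _ _ => 0) = fun _ _ => 0 := by
  apply Function.iterate_fixed
  funext x ξ
  simp [pdX]

theorem aux_iterX (F : ℝ → ℝ) (j : ℕ) :
    pdX^[j] (fun x ξ => Real.sign ξ * F x) = fun x ξ => Real.sign ξ * iteratedDeriv j F x := by
  induction j with
  | zero => simp
  | succ j ih =>
    rw [Function.iterate_succ_apply', ih]
    funext x ξ
    simp only [pdX, deriv_const_mul_field, iteratedDeriv_succ]

theorem aux_sign_abs (ξ : ℝ) (h : ξ ≠ 0) : Real.sign ξ * Real.sign ξ = 1 := by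
  rcases Real.sign_apply_eq_of_ne_zero ξ h with h | h <;> rw [h] <;> norm_num

/-- Doi's lemma: there is a bounded symbol `a(x,ξ)`, smooth and homogeneous of degree `0`
in `ξ`, whose Poisson bracket with `c(x)|ξ|^{3/2}` is bounded below by
`K ⟨x⟩^{−1−δ} |ξ|^{1/2}`, uniformly over all `c ≥ c₀`. -/
theorem doi_escape_function (c₀ δ : ℝ) (hc₀ : 0 < c₀) (hδ : 0 < δ) :
    ∃ a : ℝ → ℝ → ℝ, ∃ K > (0 : ℝ),
      ContDiffOn ℝ (⊤ : ℕ∞) (fun p : ℝ × ℝ => a p.1 p.2) {p : ℝ × ℝ | p.2 ≠ 0} ∧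
      (∀ x ξ : ℝ, ξ ≠ 0 → ∀ s : ℝ, 0 < s → a x (s * ξ) = a x ξ) ∧
      (∀ j k : ℕ, ∃ M : ℝ, ∀ x ξ : ℝ, |ξ| = 1 → |(pdX^[j] (pdXi^[k] a)) x ξ| ≤ M) ∧
      (∀ c : ℝ → ℝ, Differentiable ℝ c → (∀ x, c₀ ≤ c x) →
        ∀ x ξ : ℝ, ξ ≠ 0 →
          K * Real.sqrt (1 + x ^ 2) ^ (-(1 + δ)) * |ξ| ^ ((1 : ℝ) / 2)
            ≤ deriv (fun ξ' => c x * |ξ'| ^ ((3 : ℝ) / 2)) ξ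
                * deriv (fun x' => a x' ξ) x
              - deriv (fun x' => c x' * |ξ| ^ ((3 : ℝ) / 2)) x
                * deriv (fun ξ' => a x ξ') ξ) := by
  obtain ⟨F, hF, hFs, hFb⟩ := aux_F δ hδ
  refine ⟨fun x ξ => Real.sign ξ * F x, 3 / 2 * c₀, by positivity, ?_, ?_, ?_, ?_⟩
  · rintro ⟨x, ξ⟩ (h : ξ ≠ 0)
    apply ContDiffAt.contDiffWithinAt
    apply ContDiffAt.mul
    · have : ContDiffAt ℝ (⊤ : ℕ∞) Real.sign ξ :=
        contDiffAt_const.congr_of_eventuallyEq (aux_sign_ev ξ h)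
      exact ContDiffAt.comp (x, ξ) this contDiffAt_snd
    · exact (hFs.comp contDiff_fst).contDiffAt
  · intro x ξ h s hs
    have : Real.sign (s * ξ) = Real.sign ξ := by
      rcases lt_or_gt_of_ne h with h | h
      · rw [Real.sign_of_neg h, Real.sign_of_neg (mul_neg_of_pos_of_neg hs h)]
      · rw [Real.sign_of_pos h, Real.sign_of_pos (mul_pos hs h)]
    simp only [this]
  · intro j k
    cases k with
    | zero =>
      obtain ⟨M, hM⟩ := hFb j
      refine ⟨M, fun x ξ h => ?_⟩
      have h0 : ξ ≠ 0 := by rintro rfl; simp at h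
      rw [Function.iterate_zero_apply, aux_iterX, abs_mul]
      have : |Real.sign ξ| = 1 := by
        rcases Real.sign_apply_eq_of_ne_zero ξ h0 with h | h <;> rw [h] <;> norm_num
      rw [this, one_mul]
      exact hM x
    | succ k =>
      refine ⟨0, fun x ξ _ => ?_⟩
      have : pdXi (fun x ξ => Real.sign ξ * F x) = fun _ _ => 0 := by
        funext x ξ
        simp only [pdXi]
        rw [deriv_mul_const_field, aux_sign_deriv, zero_mul]
      rw [Function.iterate_succ_apply, this, aux_iter0, aux_iter0X]
      simp
  · intro c _ hc x ξ h
    have hp : (0 : ℝ) < 1 + x ^ 2 := by positivity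
    rw [aux_abs_deriv _ _ h, deriv_const_mul_field, (hF x).deriv, deriv_mul_const_field
      (v := F x), aux_sign_deriv, sqrt_eq_rpow, ← rpow_mul hp.le,
      show (1 : ℝ) / 2 * -(1 + δ) = -((1 + δ) / 2) by ring]
    have hA := rpow_pos_of_pos hp (-((1 + δ) / 2))
    have hB := rpow_pos_of_pos (abs_pos.2 h) ((1 : ℝ) / 2)
    set A := (1 + x ^ 2) ^ (-((1 + δ) / 2))
    set B := |ξ| ^ ((1 : ℝ) / 2)
    have hs := aux_sign_abs ξ h
    calc 3 / 2 * c₀ * A * B ≤ 3 / 2 * c x * A * B := by gcongr; exact hc x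
      _ = (Real.sign ξ * Real.sign ξ) * (3 / 2 * c x * A * B) := by rw [hs, one_mul]
      _ = _ := by ring
end
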